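/- arXiv:2009.05892 — 2 statements merged into one kernel-verified Lean document; each statement's English description precedes it below -/
import Mathlib

section
/- Sampling without replacement (completely randomized experiment): under the global causal null, define the predictable probabilities μ_t = (m − Σ_{i ∈ I_{t−1}} A_i)/(n − |I_{t−1}|), let w_t be ℱ_{t−1}-measurable with w_t ∈ [−μ_t/(1−μ_t), 1] almost surely (on the event μ_t ∈ (0,1)), and set M_0 = 1, M_t = ∏_{j=1}^t [1 + w_j·(A_{π_j}/μ_j − 1)]. Then (M_t) is a nonnegative martingale with respect to (ℱ_t), and consequently for every α ∈ (0,1), P(∃ t : M_t ≥ 1/α) ≤ α. -/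
open MeasureTheory ProbabilityTheory
open scoped ENNReal

/-!
The assignment vector is exchangeable and independent of `𝒢`, so given `𝒢` and `(A i)` for `i ∈ S`
all unrevealed `A k` have the same conditional expectation; as the total is constant, this is the
mean of the unrevealed values. The set `I t` revealed by an interactive strategy is a stopping time
of the filtration `S ↦ 𝒢 ⊔ σ(A i : i ∈ S)` indexed by finite sets, and `ℱ t` is contained in its
stopping σ-algebra. Localising to the events `I t = S` and `π (t + 1) = k` therefore shows that the
next revealed value has conditional mean `μ (t + 1)` given `ℱ t`. Hence every betting factor has
conditional mean `1`; it also lies in `[0, n]`, since a nondegenerate remaining mean has distance at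
least `1 / n` from `0` and `1`. The wealth is thus a nonnegative martingale, to which Doob's maximal
inequality applies.
-/

section IdentDistrib

variable {Ω E Γ : Type*} {m0 : MeasurableSpace Ω} {P : Measure Ω} [MeasurableSpace E]

lemma identDistrib_of_measure_preimage_singleton_eq [MeasurableSingletonClass E] {X Y : Ω → E}
    (hX : Measurable X) (hY : Measurable Y) {V : Set E} (hV : V.Countable)
    (hXV : ∀ ω, X ω ∈ V) (hYV : ∀ ω, Y ω ∈ V)
    (h : ∀ v ∈ V, P (X ⁻¹' {v}) = P (Y ⁻¹' {v})) : IdentDistrib X Y P P where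
  aemeasurable_fst := hX.aemeasurable
  aemeasurable_snd := hY.aemeasurable
  map_eq := by
    ext s hs
    have tsum_atoms {Z : Ω → E} (hZ : Measurable Z) (hZV : ∀ ω, Z ω ∈ V) :
        P (Z ⁻¹' s) = ∑' v : ↥(V ∩ s), P (Z ⁻¹' {(v : E)}) := by
      rw [tsum_measure_preimage_singleton (hV.mono Set.inter_subset_left)
        fun v _ ↦ hZ (measurableSet_singleton v), Set.preimage_inter,
        Set.preimage_eq_univ_iff.2 (Set.range_subset_iff.2 hZV), Set.univ_inter]
    rw [Measure.map_apply hX hs, Measure.map_apply hY hs, tsum_atoms hX hXV, tsum_atoms hY hYV]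
    exact tsum_congr fun v ↦ h v v.2.1

lemma condExp_comap_congr_of_identDistrib [IsFiniteMeasure P] [NormedAddCommGroup E]
    [NormedSpace ℝ E] [CompleteSpace E] [BorelSpace E] {mΓ : MeasurableSpace Γ} {Z : Ω → Γ}
    {X Y : Ω → E} (hZ : Measurable Z) (hX : Integrable X P)
    (h : IdentDistrib (fun ω ↦ (Z ω, X ω)) (fun ω ↦ (Z ω, Y ω)) P P) :
    P[X | mΓ.comap Z] =ᵐ[P] P[Y | mΓ.comap Z] := by
  have hY : Integrable Y P := (h.comp measurable_snd).integrable_snd hX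
  refine ae_eq_condExp_of_forall_setIntegral_eq hZ.comap_le hY
    (fun _ _ _ ↦ integrable_condExp.integrableOn) ?_
    stronglyMeasurable_condExp.aestronglyMeasurable
  rintro s hs -
  rw [setIntegral_condExp hZ.comap_le hX hs]
  obtain ⟨D, hD, rfl⟩ := hs
  rw [← integral_indicator (hZ hD), ← integral_indicator (hZ hD)]
  exact (h.comp (measurable_snd.indicator (measurable_fst hD))).integral_eq

end IdentDistrib

/-- A family of random variables is exchangeable if its joint law is invariant under every
permutation of the indices. -/
def Exchangeable {Ω ι E : Type*} {_ : MeasurableSpace Ω} [MeasurableSpace E]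
    (A : ι → Ω → E) (P : Measure Ω) : Prop :=
  ∀ σ : Equiv.Perm ι, IdentDistrib (fun ω i ↦ A (σ i) ω) (fun ω i ↦ A i ω) P P

section Exchangeable

variable {Ω ι E Γ : Type*} {m0 : MeasurableSpace Ω} {P : Measure Ω} [MeasurableSpace E]
  {A : ι → Ω → E}

lemma exchangeable_of_uniform [Countable ι] [MeasurableSingletonClass E]
    (hA : ∀ i, Measurable (A i)) {V : Set (ι → E)} (hV : V.Countable)
    (hV_perm : ∀ v ∈ V, ∀ σ : Equiv.Perm ι, v ∘ σ ∈ V) (hAV : ∀ ω, (A · ω) ∈ V)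
    {c : ℝ≥0∞} (hunif : ∀ v ∈ V, P {ω | ∀ i, A i ω = v i} = c) : Exchangeable A P := by
  intro σ
  refine identDistrib_of_measure_preimage_singleton_eq (by fun_prop) (by fun_prop) hV
    (fun ω ↦ hV_perm _ (hAV ω) σ) hAV fun v hv ↦ ?_
  have permuted_atom : (fun ω i ↦ A (σ i) ω) ⁻¹' {v} = {ω | ∀ i, A i ω = (v ∘ σ.symm) i} := by
    ext ω
    simpa [funext_iff] using σ.forall_congr_left (p := fun i ↦ A (σ i) ω = v i)
  have atom : (fun ω i ↦ A i ω) ⁻¹' {v} = {ω | ∀ i, A i ω = v i} := by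
    ext ω
    simp [funext_iff]
  rw [permuted_atom, atom, hunif _ (hV_perm v hv σ.symm), hunif v hv]

lemma exchangeable_of_uniform_binary [Fintype ι] {A : ι → Ω → ℝ} (hA : ∀ i, Measurable (A i))
    (hA01 : ∀ i ω, A i ω = 0 ∨ A i ω = 1) {s : ℝ} (hsum : ∀ ω, ∑ i, A i ω = s) {c : ℝ≥0∞}
    (hunif : ∀ v : ι → ℝ, (∀ i, v i = 0 ∨ v i = 1) → ∑ i, v i = s →
      P {ω | ∀ i, A i ω = v i} = c) : Exchangeable A P := by
  have binary_finite : {v : ι → ℝ | ∀ i, v i ∈ ({0, 1} : Set ℝ)}.Finite :=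
    Set.Finite.pi' fun _ ↦ Set.toFinite _
  refine exchangeable_of_uniform hA (V := {v | (∀ i, v i = 0 ∨ v i = 1) ∧ ∑ i, v i = s})
    (binary_finite.subset fun v hv ↦ hv.1).countable (fun v hv σ ↦ ⟨fun i ↦ hv.1 (σ i), ?_⟩)
    (fun ω ↦ ⟨fun i ↦ hA01 i ω, hsum ω⟩) fun v hv ↦ hunif v hv.1 hv.2
  exact (Equiv.sum_comp σ v).trans hv.2

lemma Exchangeable.condExp_congr [IsFiniteMeasure P] [NormedAddCommGroup E] [NormedSpace ℝ E]
    [CompleteSpace E] [BorelSpace E] {mΓ : MeasurableSpace Γ} (hexch : Exchangeable A P)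
    (hA : ∀ i, Measurable (A i)) {G : Ω → Γ} (hG : Measurable G)
    (hindep : IndepFun G (fun ω i ↦ A i ω) P) {S : Finset ι} {i k : ι} (hi : i ∉ S) (hk : k ∉ S)
    (hAi : Integrable (A i) P) :
    P[A i | MeasurableSpace.comap (fun ω ↦ (G ω, S.restrict (A · ω))) inferInstance] =ᵐ[P]
      P[A k | MeasurableSpace.comap (fun ω ↦ (G ω, S.restrict (A · ω))) inferInstance] := by
  classical
  have swapped_law : IdentDistrib (fun ω ↦ (G ω, fun j ↦ A j ω))
      (fun ω ↦ (G ω, fun j ↦ A (Equiv.swap i k j) ω)) P P :=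
    (IdentDistrib.refl hG.aemeasurable).prodMk (hexch (Equiv.swap i k)).symm hindep
      (hindep.comp measurable_id (φ := id)
        (measurable_pi_lambda _ fun j ↦ measurable_pi_apply (Equiv.swap i k j)))
  have S_fixed (ω : Ω) : S.restrict (fun j ↦ A (Equiv.swap i k j) ω) = S.restrict (A · ω) := by
    ext j
    exact congrArg (A · ω) (Equiv.swap_apply_of_ne_of_ne (ne_of_mem_of_not_mem j.2 hi)
      (ne_of_mem_of_not_mem j.2 hk))
  have read_off : Measurable fun p : Γ × (ι → E) ↦ ((p.1, S.restrict p.2), p.2 i) := by fun_prop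
  refine condExp_comap_congr_of_identDistrib (by fun_prop) hAi ?_
  simpa [Function.comp_def, S_fixed] using swapped_law.comp read_off

end Exchangeable

section RevealedFiltration

variable {Ω ι E : Type*} {𝒢 m0 : MeasurableSpace Ω} {P : Measure Ω} [MeasurableSpace E]
  {A : ι → Ω → E}

/-- The information available once the background σ-algebra `𝒢` and the variables indexed by the
finite set `S` are known, as a filtration indexed by `S`. A random set that only looks at what it
has already revealed is a stopping time of this filtration. -/
def revealedFiltration (hA : ∀ i, Measurable (A i)) (h𝒢 : 𝒢 ≤ m0) :
    Filtration (Finset ι) m0 where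
  seq S := 𝒢 ⊔ ⨆ i ∈ S, MeasurableSpace.comap (A i) inferInstance
  mono' _ _ hST := sup_le_sup_left (biSup_mono fun _ hi ↦ hST hi) _
  le' _ := sup_le h𝒢 (iSup₂_le fun i _ ↦ (hA i).comap_le)

variable {hA : ∀ i, Measurable (A i)} {h𝒢 : 𝒢 ≤ m0}

lemma measurable_revealedFiltration {S : Finset ι} {i : ι} (hi : i ∈ S) :
    Measurable[revealedFiltration hA h𝒢 S] (A i) :=
  measurable_iff_comap_le.2 <| le_sup_of_le_right <|
    le_iSup₂ (f := fun i (_ : i ∈ S) ↦ MeasurableSpace.comap (A i) inferInstance) i hi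

lemma revealedFiltration_eq_comap (S : Finset ι) :
    revealedFiltration hA h𝒢 S =
      (𝒢.prod MeasurableSpace.pi).comap fun ω ↦ (ω, S.restrict (A · ω)) := by
  have comap_restrict : MeasurableSpace.pi.comap (fun ω ↦ S.restrict (A · ω)) =
      ⨆ i ∈ S, MeasurableSpace.comap (A i) inferInstance := by
    simp_rw [MeasurableSpace.pi, MeasurableSpace.comap_iSup, MeasurableSpace.comap_comp,
      iSup_subtype']
    rfl
  rw [MeasurableSpace.comap_prodMk, comap_restrict]
  exact congrArg (· ⊔ _) MeasurableSpace.comap_id.symm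

lemma Exchangeable.condExp_revealedFiltration_congr [IsFiniteMeasure P] [NormedAddCommGroup E]
    [NormedSpace ℝ E] [CompleteSpace E] [BorelSpace E] (hexch : Exchangeable A P)
    (hindep : Indep (⨆ i, MeasurableSpace.comap (A i) inferInstance) 𝒢 P) {S : Finset ι} {i k : ι}
    (hi : i ∉ S) (hk : k ∉ S) (hAi : Integrable (A i) P) :
    P[A i | revealedFiltration hA h𝒢 S] =ᵐ[P] P[A k | revealedFiltration hA h𝒢 S] := by
  have comap_family : MeasurableSpace.pi.comap (fun ω i ↦ A i ω) =
      ⨆ i, MeasurableSpace.comap (A i) inferInstance := by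
    simp_rw [MeasurableSpace.pi, MeasurableSpace.comap_iSup, MeasurableSpace.comap_comp]
    rfl
  have hindepFun := (IndepFun_iff_Indep (mβ := 𝒢) id (fun ω i ↦ A i ω) P).2 <| by
    rw [MeasurableSpace.comap_id, comap_family]
    exact hindep.symm
  rw [revealedFiltration_eq_comap]
  exact hexch.condExp_congr hA (measurable_id'' h𝒢) hindepFun hi hk hAi

end RevealedFiltration

/-- The average of `a` over the indices outside `S`; it is `0` when there are none. -/
noncomputable def remainingMean {ι : Type*} [Fintype ι] [DecidableEq ι] (a : ι → ℝ)
    (S : Finset ι) : ℝ :=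
  (∑ i ∈ Sᶜ, a i) / Sᶜ.card

section RemainingMean

variable {ι : Type*} [Fintype ι] [DecidableEq ι] {a : ι → ℝ}

lemma remainingMean_eq_sub_div (a : ι → ℝ) (S : Finset ι) :
    remainingMean a S = (∑ i, a i - ∑ i ∈ S, a i) / (Fintype.card ι - S.card) := by
  rw [remainingMean, ← Finset.sum_add_sum_compl S, add_sub_cancel_left, Finset.card_compl,
    Nat.cast_sub (Finset.card_le_univ S)]

lemma remainingMean_one_sub {S : Finset ι} (hS : Sᶜ.Nonempty) :
    remainingMean (1 - a) S = 1 - remainingMean a S := by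
  have hcard : (Sᶜ.card : ℝ) ≠ 0 := Nat.cast_ne_zero.2 hS.card_ne_zero
  simp [remainingMean, sub_div, hcard]

lemma inv_remainingMean_le_card (ha : ∀ i, a i = 0 ∨ a i = 1) {S : Finset ι}
    (hpos : 0 < remainingMean a S) : (remainingMean a S)⁻¹ ≤ Fintype.card ι := by
  obtain ⟨i, hi, hai⟩ : ∃ i ∈ Sᶜ, a i ≠ 0 :=
    Finset.exists_ne_zero_of_sum_ne_zero fun h ↦ by simp [remainingMean, h] at hpos
  have one_le_sum : 1 ≤ ∑ i ∈ Sᶜ, a i :=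
    ((ha i).resolve_left hai).ge.trans <| Finset.single_le_sum
      (fun j _ ↦ by rcases ha j with h | h <;> simp [h]) hi
  rw [remainingMean, inv_div]
  calc (Sᶜ.card : ℝ) / ∑ i ∈ Sᶜ, a i ≤ Sᶜ.card := div_le_self (Nat.cast_nonneg _) one_le_sum
    _ ≤ Fintype.card ι := Nat.cast_le.2 (Finset.card_le_univ _)

lemma inv_one_sub_remainingMean_le_card (ha : ∀ i, a i = 0 ∨ a i = 1) {S : Finset ι}
    (hS : Sᶜ.Nonempty) (hlt : remainingMean a S < 1) :
    (1 - remainingMean a S)⁻¹ ≤ Fintype.card ι := by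
  rw [← remainingMean_one_sub hS]
  refine inv_remainingMean_le_card (fun i ↦ ?_) ?_
  · rcases ha i with h | h <;> simp [h]
  · rw [remainingMean_one_sub hS]
    exact sub_pos.2 hlt

end RemainingMean

section CondExp

variable {Ω ι E : Type*} {m m0 : MeasurableSpace Ω} {P : Measure Ω} [NormedAddCommGroup E]
  [NormedSpace ℝ E] [CompleteSpace E]

lemma condExp_apply_measurable_index [Finite ι] [MeasurableSpace ι] [MeasurableSingletonClass ι]
    (hm : m ≤ m0) {A : ι → Ω → E} (hA : ∀ i, Integrable (A i) P) {q : Ω → ι}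
    (hq : Measurable[m] q) :
    P[fun ω ↦ A (q ω) ω | m] =ᵐ[P] fun ω ↦ P[A (q ω) | m] ω := by
  have := Fintype.ofFinite ι
  classical
  have hfiber (k : ι) : MeasurableSet[m] (q ⁻¹' {k}) := hq (measurableSet_singleton k)
  have sum_fibers (f : ι → Ω → E) :
      (fun ω ↦ f (q ω) ω) = ∑ k, (q ⁻¹' {k}).indicator (f k) := by
    ext ω
    simp [Finset.sum_apply, Set.indicator_apply]
  rw [sum_fibers A, sum_fibers fun k ↦ P[A k | m]]
  refine (condExp_finsetSum (fun k _ ↦ (hA k).indicator (hm _ (hfiber k))) m).trans ?_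
  exact eventuallyEq_sum fun k _ ↦ condExp_indicator (hA k) (hfiber k)

lemma condExp_stoppingTime_ae_eq [PartialOrder ι] [Countable ι] [IsFiniteMeasure P]
    {ℱ : Filtration ι m0} {τ : Ω → ι} (hτ : IsStoppingTime ℱ fun ω ↦ (τ ω : WithTop ι))
    (f : Ω → E) : P[f | hτ.measurableSpace] =ᵐ[P] fun ω ↦ P[f | ℱ (τ ω)] ω := by
  have on_level (i : ι) : ∀ᵐ ω ∂P, (τ ω : WithTop ι) = i →
      P[f | hτ.measurableSpace] ω = P[f | ℱ i] ω := by
    have hlevel : MeasurableSet[hτ.measurableSpace] {ω | (τ ω : WithTop ι) = i} := by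
      rw [← Set.univ_inter {ω | _}, hτ.measurableSet_inter_eq_iff, Set.univ_inter]
      exact hτ.measurableSet_eq_of_countable i
    refine (ae_restrict_iff' (hτ.measurableSpace_le _ hlevel)).1 ?_
    refine condExp_ae_eq_restrict_of_measurableSpace_eq_on hτ.measurableSpace_le (ℱ.le i) hlevel
      fun t ↦ ?_
    rw [Set.inter_comm, hτ.measurableSet_inter_eq_iff]
  filter_upwards [ae_all_iff.2 on_level] with ω hω using hω (τ ω) rfl

end CondExp

section StoppingReveal

variable {Ω ι E : Type*} {𝒢 m0 : MeasurableSpace Ω} {P : Measure Ω}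

lemma Exchangeable.condExp_eq_remainingMean [Fintype ι] [DecidableEq ι] [IsFiniteMeasure P]
    {A : ι → Ω → ℝ} {hA : ∀ i, Measurable (A i)} {h𝒢 : 𝒢 ≤ m0} (hexch : Exchangeable A P)
    (hindep : Indep (⨆ i, MeasurableSpace.comap (A i) inferInstance) 𝒢 P)
    (hint : ∀ i, Integrable (A i) P) {c : ℝ} (hsum : ∀ ω, ∑ i, A i ω = c) {S : Finset ι} {k : ι}
    (hk : k ∉ S) :
    P[A k | revealedFiltration hA h𝒢 S] =ᵐ[P] fun ω ↦ remainingMean (A · ω) S := by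
  set 𝓡 := revealedFiltration hA h𝒢 S
  have unrevealed_sum : ∑ i ∈ Sᶜ, A i = fun ω ↦ c - ∑ i ∈ S, A i ω := by
    ext ω
    rw [Finset.sum_apply, ← hsum ω, ← Finset.sum_add_sum_compl S, add_sub_cancel_left]
  have measurable_sum : StronglyMeasurable[𝓡] (∑ i ∈ Sᶜ, A i) := by
    rw [unrevealed_sum]
    exact (measurable_const.sub (Finset.measurable_fun_sum _
      fun i hi ↦ measurable_revealedFiltration hi)).stronglyMeasurable
  have sum_eq : ∑ i ∈ Sᶜ, A i =ᵐ[P] ∑ _i ∈ Sᶜ, P[A k | 𝓡] := calc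
    ∑ i ∈ Sᶜ, A i = P[∑ i ∈ Sᶜ, A i | 𝓡] :=
      (condExp_of_stronglyMeasurable (Filtration.le _ S) measurable_sum
        (integrable_finsetSum' _ fun i _ ↦ hint i)).symm
    _ =ᵐ[P] ∑ i ∈ Sᶜ, P[A i | 𝓡] := condExp_finsetSum (fun i _ ↦ hint i) _
    _ =ᵐ[P] ∑ _i ∈ Sᶜ, P[A k | 𝓡] := eventuallyEq_sum fun i hi ↦
      hexch.condExp_revealedFiltration_congr hindep (Finset.mem_compl.1 hi) hk (hint i)
  have hcard : (Sᶜ.card : ℝ) ≠ 0 :=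
    Nat.cast_ne_zero.2 (Finset.card_ne_zero_of_mem (Finset.mem_compl.2 hk))
  filter_upwards [sum_eq] with ω hω
  rw [remainingMean, eq_div_iff hcard, mul_comm]
  simpa using hω.symm

variable [MeasurableSpace ι] [MeasurableSingletonClass ι]

lemma Exchangeable.condExp_stopped_eq_remainingMean [Fintype ι] [DecidableEq ι]
    [IsFiniteMeasure P] {A : ι → Ω → ℝ} {hA : ∀ i, Measurable (A i)} {h𝒢 : 𝒢 ≤ m0}
    (hexch : Exchangeable A P)
    (hindep : Indep (⨆ i, MeasurableSpace.comap (A i) inferInstance) 𝒢 P)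
    (hint : ∀ i, Integrable (A i) P) {c : ℝ} (hsum : ∀ ω, ∑ i, A i ω = c) {J : Ω → Finset ι}
    (hJ : IsStoppingTime (revealedFiltration hA h𝒢) fun ω ↦ (J ω : WithTop (Finset ι)))
    {q : Ω → ι} (hq : Measurable[hJ.measurableSpace] q) (hqJ : ∀ ω, q ω ∉ J ω) :
    P[fun ω ↦ A (q ω) ω | hJ.measurableSpace] =ᵐ[P] fun ω ↦ remainingMean (A · ω) (J ω) := by
  have given_revealed : ∀ᵐ ω ∂P, ∀ (S : Finset ι) (k : {k // k ∉ S}),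
      P[A k | revealedFiltration hA h𝒢 S] ω = remainingMean (A · ω) S :=
    ae_all_iff.2 fun S ↦ ae_all_iff.2 fun k ↦
      hexch.condExp_eq_remainingMean hindep hint hsum k.2
  filter_upwards [condExp_apply_measurable_index hJ.measurableSpace_le hint hq,
    ae_all_iff.2 fun k ↦ condExp_stoppingTime_ae_eq hJ (A k), given_revealed] with ω h₁ h₂ h₃
  rw [h₁, h₂, h₃ (J ω) ⟨q ω, hqJ ω⟩]

variable [MeasurableSpace E] {A : ι → Ω → E} {hA : ∀ i, Measurable (A i)} {h𝒢 : 𝒢 ≤ m0}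
  {J : Ω → Finset ι} {q : Ω → ι}

lemma isStoppingTime_insert [DecidableEq ι]
    (hJ : IsStoppingTime (revealedFiltration hA h𝒢) fun ω ↦ (J ω : WithTop (Finset ι)))
    (hq : Measurable[hJ.measurableSpace] q) :
    IsStoppingTime (revealedFiltration hA h𝒢)
      fun ω ↦ (↑(insert (q ω) (J ω)) : WithTop (Finset ι)) := by
  intro S
  have split_index : {ω | (↑(insert (q ω) (J ω)) : WithTop (Finset ι)) ≤ S} =
      ⋃ k ∈ S, q ⁻¹' {k} ∩ {ω | (J ω : WithTop (Finset ι)) ≤ S} := by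
    ext ω
    simp [Finset.insert_subset_iff]
  rw [split_index]
  exact Finset.measurableSet_biUnion _ fun k _ ↦ (hq (measurableSet_singleton k)).2 S

lemma measurable_apply_index_insert [DecidableEq ι] [Countable ι]
    (hJ : IsStoppingTime (revealedFiltration hA h𝒢) fun ω ↦ (J ω : WithTop (Finset ι)))
    (hq : Measurable[hJ.measurableSpace] q) :
    Measurable[(isStoppingTime_insert hJ hq).measurableSpace] fun ω ↦ A (q ω) ω := by
  intro D hD
  have hqk (k : ι) : MeasurableSet[hJ.measurableSpace] (q ⁻¹' {k}) :=
    hq (measurableSet_singleton k)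
  refine ⟨?_, fun S ↦ ?_⟩
  · have split_index : (fun ω ↦ A (q ω) ω) ⁻¹' D = ⋃ k, A k ⁻¹' D ∩ q ⁻¹' {k} := by
      ext ω
      simp
    rw [split_index]
    exact MeasurableSet.iUnion fun k ↦ MeasurableSet.inter (le_iSup (revealedFiltration hA h𝒢) {k} _
      (measurable_revealedFiltration (Finset.mem_singleton_self k) hD)) (hqk k).1
  · have split_index : (fun ω ↦ A (q ω) ω) ⁻¹' D ∩
        {ω | (↑(insert (q ω) (J ω)) : WithTop (Finset ι)) ≤ S} =
          ⋃ k ∈ S, A k ⁻¹' D ∩ (q ⁻¹' {k} ∩ {ω | (J ω : WithTop (Finset ι)) ≤ S}) := by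
      ext ω
      simp [Finset.insert_subset_iff]
    rw [split_index]
    exact Finset.measurableSet_biUnion _ fun k hk ↦
      MeasurableSet.inter (measurable_revealedFiltration hk hD) ((hqk k).2 S)

end StoppingReveal

/-- Interactive revealing of the variables `A` for `N` steps. Besides the background information
`𝒢`, the variables indexed by `I₀` are known at the start; at step `t + 1 ≤ N` the analyst picks an
index `π (t + 1) ∉ I t` from the information `ℱ t` collected so far, and its variable is then
revealed. Nothing is required after step `N`, nor of the unused value `π 0`. -/
structure IsInteractiveReveal {Ω ι E : Type*} [DecidableEq ι] [MeasurableSpace ι]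
    [MeasurableSpace E] (A : ι → Ω → E) (𝒢 : MeasurableSpace Ω) (I₀ : Finset ι) (N : ℕ)
    (π : ℕ → Ω → ι) (I : ℕ → Ω → Finset ι) (ℱ : ℕ → MeasurableSpace Ω) : Prop where
  revealed_zero : ∀ ω, I 0 ω = I₀
  revealed_succ : ∀ t < N, ∀ ω, I (t + 1) ω = insert (π (t + 1) ω) (I t ω)
  info_zero : ℱ 0 = 𝒢 ⊔ ⨆ i ∈ I₀, MeasurableSpace.comap (A i) inferInstance
  info_succ : ∀ t < N, ℱ (t + 1) =
    ℱ t ⊔ MeasurableSpace.comap (fun ω ↦ A (π (t + 1) ω) ω) inferInstance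
  measurable_index : ∀ t < N, Measurable[ℱ t] (π (t + 1))
  index_notMem : ∀ t < N, ∀ ω, π (t + 1) ω ∉ I t ω

namespace IsInteractiveReveal

variable {Ω ι E : Type*} {𝒢 m0 : MeasurableSpace Ω} {P : Measure Ω} [MeasurableSpace E]
  [DecidableEq ι] [MeasurableSpace ι] {I₀ : Finset ι} {N : ℕ}
  {π : ℕ → Ω → ι} {I : ℕ → Ω → Finset ι} {ℱ : ℕ → MeasurableSpace Ω}

section General

variable {A : ι → Ω → E}

lemma exists_isStoppingTime [Countable ι] [MeasurableSingletonClass ι]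
    (hr : IsInteractiveReveal A 𝒢 I₀ N π I ℱ) (hA : ∀ i, Measurable (A i)) (h𝒢 : 𝒢 ≤ m0) {t : ℕ}
    (ht : t ≤ N) :
    ∃ hI : IsStoppingTime (revealedFiltration hA h𝒢) fun ω ↦ (I t ω : WithTop (Finset ι)),
      ℱ t ≤ hI.measurableSpace := by
  induction t with
  | zero =>
    have hI : (fun ω ↦ (I 0 ω : WithTop (Finset ι))) = fun _ ↦ ↑I₀ :=
      funext fun ω ↦ congrArg _ (hr.revealed_zero ω)
    rw [hI]
    refine ⟨isStoppingTime_const _ I₀, ?_⟩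
    rw [IsStoppingTime.measurableSpace_const, hr.info_zero]
    exact le_rfl
  | succ t ih =>
    obtain ⟨hI, hle⟩ := ih (Nat.le_of_succ_le ht)
    have hπ : Measurable[hI.measurableSpace] (π (t + 1)) :=
      (hr.measurable_index t ht).mono hle le_rfl
    have hI_succ : (fun ω ↦ (I (t + 1) ω : WithTop (Finset ι))) =
        fun ω ↦ ↑(insert (π (t + 1) ω) (I t ω)) :=
      funext fun ω ↦ congrArg _ (hr.revealed_succ t ht ω)
    rw [hI_succ, hr.info_succ t ht]
    refine ⟨isStoppingTime_insert hI hπ, sup_le (hle.trans ?_)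
      (measurable_apply_index_insert hI hπ).comap_le⟩
    exact hI.measurableSpace_mono _ fun ω ↦ WithTop.coe_le_coe.2 (Finset.subset_insert _ _)

lemma info_mono (hr : IsInteractiveReveal A 𝒢 I₀ N π I ℱ) {s t : ℕ} (hst : s ≤ t) (ht : t ≤ N) :
    ℱ s ≤ ℱ t := by
  induction t, hst using Nat.le_induction with
  | base => exact le_rfl
  | succ t _ ih => exact (ih (Nat.le_of_succ_le ht)).trans (hr.info_succ t ht ▸ le_sup_left)

/-- The information flow of an interactive reveal as a filtration, constant after its last step. -/
def filtration [Countable ι] [MeasurableSingletonClass ι]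
    (hr : IsInteractiveReveal A 𝒢 I₀ N π I ℱ) (hA : ∀ i, Measurable (A i)) (h𝒢 : 𝒢 ≤ m0) :
    Filtration ℕ m0 where
  seq t := ℱ (min t N)
  mono' _ _ hst := hr.info_mono (min_le_min_right N hst) (min_le_right _ N)
  le' t := by
    obtain ⟨hI, hle⟩ := hr.exists_isStoppingTime hA h𝒢 (min_le_right t N)
    exact hle.trans hI.measurableSpace_le

lemma filtration_apply [Countable ι] [MeasurableSingletonClass ι]
    (hr : IsInteractiveReveal A 𝒢 I₀ N π I ℱ) (hA : ∀ i, Measurable (A i)) (h𝒢 : 𝒢 ≤ m0) {t : ℕ}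
    (ht : t ≤ N) : hr.filtration hA h𝒢 t = ℱ t :=
  congrArg ℱ (min_eq_left ht)

lemma card_revealed (hr : IsInteractiveReveal A 𝒢 I₀ N π I ℱ) {t : ℕ} (ht : t ≤ N) (ω : Ω) :
    (I t ω).card = I₀.card + t := by
  induction t with
  | zero => rw [hr.revealed_zero, Nat.add_zero]
  | succ t ih =>
    rw [hr.revealed_succ t ht, Finset.card_insert_of_notMem (hr.index_notMem t ht ω),
      ih (Nat.le_of_succ_le ht), Nat.add_assoc]

lemma measurable_apply_index (hr : IsInteractiveReveal A 𝒢 I₀ N π I ℱ) {t : ℕ} (ht : t < N) :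
    Measurable[ℱ (t + 1)] fun ω ↦ A (π (t + 1) ω) ω :=
  measurable_iff_comap_le.2 (hr.info_succ t ht ▸ le_sup_right)

lemma measurable_sum_revealed [AddCommMonoid E] [MeasurableAdd₂ E]
    (hr : IsInteractiveReveal A 𝒢 I₀ N π I ℱ) {t : ℕ} (ht : t ≤ N) :
    Measurable[ℱ t] fun ω ↦ ∑ i ∈ I t ω, A i ω := by
  induction t with
  | zero =>
    simp_rw [hr.revealed_zero]
    rw [hr.info_zero]
    refine Finset.measurable_fun_sum _ fun i hi ↦ measurable_iff_comap_le.2 ?_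
    exact le_sup_of_le_right <|
      le_iSup₂ (f := fun i (_ : i ∈ I₀) ↦ MeasurableSpace.comap (A i) inferInstance) i hi
  | succ t ih =>
    have sum_succ (ω : Ω) :
        ∑ i ∈ I (t + 1) ω, A i ω = A (π (t + 1) ω) ω + ∑ i ∈ I t ω, A i ω := by
      rw [hr.revealed_succ t ht, Finset.sum_insert (hr.index_notMem t ht ω)]
    simp_rw [sum_succ]
    exact (hr.measurable_apply_index ht).add
      ((ih (Nat.le_of_succ_le ht)).mono (hr.info_mono t.le_succ ht) le_rfl)

end General

section RemainingMean

variable [Fintype ι] {A : ι → Ω → ℝ} {c : ℝ}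

lemma measurable_remainingMean (hr : IsInteractiveReveal A 𝒢 I₀ N π I ℱ)
    (hsum : ∀ ω, ∑ i, A i ω = c) {t : ℕ} (ht : t ≤ N) :
    Measurable[ℱ t] fun ω ↦ remainingMean (A · ω) (I t ω) := by
  simp_rw [remainingMean_eq_sub_div, hsum, hr.card_revealed ht]
  exact (measurable_const.sub (hr.measurable_sum_revealed ht)).div_const _

lemma condExp_apply_index_eq_remainingMean [MeasurableSingletonClass ι] [IsFiniteMeasure P]
    (hr : IsInteractiveReveal A 𝒢 I₀ N π I ℱ) (hA : ∀ i, Measurable (A i)) (h𝒢 : 𝒢 ≤ m0)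
    (hexch : Exchangeable A P)
    (hindep : Indep (⨆ i, MeasurableSpace.comap (A i) inferInstance) 𝒢 P)
    (hint : ∀ i, Integrable (A i) P) (hsum : ∀ ω, ∑ i, A i ω = c) {t : ℕ} (ht : t < N) :
    P[fun ω ↦ A (π (t + 1) ω) ω | ℱ t] =ᵐ[P] fun ω ↦ remainingMean (A · ω) (I t ω) := by
  obtain ⟨hI, hle⟩ := hr.exists_isStoppingTime hA h𝒢 ht.le
  have hstopped : P[fun ω ↦ A (π (t + 1) ω) ω | hI.measurableSpace] =ᵐ[P]
      fun ω ↦ remainingMean (A · ω) (I t ω) :=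
    hexch.condExp_stopped_eq_remainingMean hindep hint hsum hI
      ((hr.measurable_index t ht).mono hle le_rfl) (hr.index_notMem t ht)
  calc P[fun ω ↦ A (π (t + 1) ω) ω | ℱ t]
    _ =ᵐ[P] P[P[fun ω ↦ A (π (t + 1) ω) ω | hI.measurableSpace] | ℱ t] :=
      (condExp_condExp_of_le hle hI.measurableSpace_le).symm
    _ =ᵐ[P] P[fun ω ↦ remainingMean (A · ω) (I t ω) | ℱ t] := condExp_congr_ae hstopped
    _ = fun ω ↦ remainingMean (A · ω) (I t ω) :=
      condExp_of_stronglyMeasurable (hle.trans hI.measurableSpace_le)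
        (hr.measurable_remainingMean hsum ht.le).stronglyMeasurable
        (integrable_condExp.congr hstopped)

end RemainingMean

end IsInteractiveReveal

/-- The factor by which the wealth of a gambler is multiplied who bets `w` on an outcome with
forecast probability `μ`, when the outcome turns out to be `a`. -/
noncomputable def betFactor (w μ a : ℝ) : ℝ :=
  1 + w * (a / μ - 1)

/-- The bets `w` that cannot bankrupt a gambler betting on an outcome in `[0, 1]` with forecast
`μ`. No bet is possible against a degenerate forecast, where the odds `a / μ` may be junk. -/
def IsAdmissibleBet (μ w : ℝ) : Prop :=
  (μ ∈ Set.Ioo (0 : ℝ) 1 → w ∈ Set.Icc (-(μ / (1 - μ))) 1) ∧ (μ ∉ Set.Ioo (0 : ℝ) 1 → w = 0)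

/-- The wealth after `t` rounds of a gambler with initial wealth `1` who bets `w j` in round
`j = 1, …, t`, where the forecast is `μ j` and the outcome `X j`. -/
noncomputable def wealth {Ω : Type*} (w μ X : ℕ → Ω → ℝ) (t : ℕ) (ω : Ω) : ℝ :=
  ∏ j ∈ Finset.range t, betFactor (w (j + 1) ω) (μ (j + 1) ω) (X (j + 1) ω)

section Betting

lemma betFactor_nonneg {w μ a : ℝ} (hw : IsAdmissibleBet μ w) (ha : a ∈ Set.Icc (0 : ℝ) 1) :
    0 ≤ betFactor w μ a := by
  by_cases hμ : μ ∈ Set.Ioo (0 : ℝ) 1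
  · have hμ0 : 0 < μ := hμ.1
    have hμ1 : 0 < 1 - μ := sub_pos.2 hμ.2
    obtain ⟨hw_lower, hw_le⟩ := hw.1 hμ
    rcases le_total 0 w with hw0 | hw0
    · calc 0 ≤ (1 - w) + w * (a / μ) :=
            add_nonneg (sub_nonneg.2 hw_le) (mul_nonneg hw0 (div_nonneg ha.1 hμ0.le))
        _ = betFactor w μ a := by rw [betFactor]; ring
    · calc 0 = 1 + -(μ / (1 - μ)) * (1 / μ - 1) := by field_simp; ring
        _ ≤ 1 + w * (1 / μ - 1) := by
            gcongr
            exact sub_nonneg.2 ((one_le_div hμ0).2 hμ.2.le)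
        _ ≤ betFactor w μ a := by
            have : a / μ ≤ 1 / μ := by gcongr; exact ha.2
            rw [betFactor]
            linarith [mul_le_mul_of_nonpos_left this hw0]
  · simp [betFactor, hw.2 hμ]

lemma betFactor_le {w μ a K : ℝ} (hw : IsAdmissibleBet μ w) (ha : a ∈ Set.Icc (0 : ℝ) 1)
    (hK : 1 ≤ K) (hμK : μ ∈ Set.Ioo (0 : ℝ) 1 → μ⁻¹ ≤ K ∧ (1 - μ)⁻¹ ≤ K) :
    betFactor w μ a ≤ K := by
  by_cases hμ : μ ∈ Set.Ioo (0 : ℝ) 1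
  · have hμ0 : 0 < μ := hμ.1
    have hμ1 : 0 < 1 - μ := sub_pos.2 hμ.2
    obtain ⟨hw_lower, hw_le⟩ := hw.1 hμ
    rcases le_total 0 w with hw0 | hw0
    · have odds_le : a / μ ≤ K :=
        ((div_le_div_of_nonneg_right ha.2 hμ0.le).trans_eq (one_div μ)).trans (hμK hμ).1
      calc betFactor w μ a = (1 - w) * 1 + w * (a / μ) := by rw [betFactor]; ring
        _ ≤ (1 - w) * K + w * K := by gcongr
        _ = K := by ring
    · calc betFactor w μ a = 1 - w + w * (a / μ) := by rw [betFactor]; ring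
        _ ≤ 1 - w := add_le_of_nonpos_right
            (mul_nonpos_of_nonpos_of_nonneg hw0 (div_nonneg ha.1 hμ0.le))
        _ ≤ 1 + μ / (1 - μ) := by linarith
        _ = (1 - μ)⁻¹ := by field_simp; ring
        _ ≤ K := (hμK hμ).2
  · simpa [betFactor, hw.2 hμ] using hK

lemma betFactor_eq_one_add_mul_sub {w μ : ℝ} (hw : IsAdmissibleBet μ w) (a : ℝ) :
    betFactor w μ a = 1 + w / μ * (a - μ) := by
  by_cases hμ : μ ∈ Set.Ioo (0 : ℝ) 1
  · have hμ0 : μ ≠ 0 := hμ.1.ne'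
    rw [betFactor]
    field_simp
  · simp [betFactor, hw.2 hμ]

variable {Ω : Type*} {m m0 : MeasurableSpace Ω} {P : Measure Ω}

lemma condExp_betFactor [IsFiniteMeasure P] (hm : m ≤ m0) {w μ X : Ω → ℝ}
    (hw_meas : Measurable[m] w) (hμ_meas : Measurable[m] μ) (hX : Integrable X P)
    (hXμ : P[X | m] =ᵐ[P] μ) (hw : ∀ᵐ ω ∂P, IsAdmissibleBet (μ ω) (w ω))
    (hint : Integrable (fun ω ↦ betFactor (w ω) (μ ω) (X ω)) P) :
    P[fun ω ↦ betFactor (w ω) (μ ω) (X ω) | m] =ᵐ[P] 1 := by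
  have hμ : Integrable μ P := integrable_condExp.congr hXμ
  have hone : Integrable (1 : Ω → ℝ) P := integrable_const 1
  have factor_eq : (fun ω ↦ betFactor (w ω) (μ ω) (X ω)) =ᵐ[P] 1 + (w / μ) * (X - μ) :=
    hw.mono fun ω hω ↦ betFactor_eq_one_add_mul_sub hω (X ω)
  have hgain : Integrable ((w / μ) * (X - μ)) P := by
    simpa using (hint.congr factor_eq).sub hone
  have centred : P[X - μ | m] =ᵐ[P] 0 := by
    filter_upwards [condExp_sub hX hμ m, hXμ] with ω hω hμω
    rw [hω, Pi.sub_apply, hμω, condExp_of_stronglyMeasurable hm hμ_meas.stronglyMeasurable hμ,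
      sub_self, Pi.zero_apply]
  calc P[fun ω ↦ betFactor (w ω) (μ ω) (X ω) | m]
    _ =ᵐ[P] P[1 + (w / μ) * (X - μ) | m] := condExp_congr_ae factor_eq
    _ =ᵐ[P] P[1 | m] + P[(w / μ) * (X - μ) | m] := condExp_add hone hgain m
    _ =ᵐ[P] P[1 | m] + (w / μ) * P[X - μ | m] := .add .rfl <|
      condExp_mul_of_stronglyMeasurable_left (hw_meas.div hμ_meas).stronglyMeasurable hgain
        (hX.sub hμ)
    _ =ᵐ[P] 1 + (w / μ) * 0 := .add (condExp_const hm (1 : ℝ)).eventuallyEq (.mul .rfl centred)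
    _ = 1 := by rw [mul_zero, add_zero]

lemma stronglyMeasurable_prod_range {𝒻 : Filtration ℕ m0} {g : ℕ → Ω → ℝ} {t : ℕ}
    (hg_meas : ∀ j < t, StronglyMeasurable[𝒻 (j + 1)] (g j)) :
    StronglyMeasurable[𝒻 t] (∏ j ∈ Finset.range t, g j) :=
  Finset.stronglyMeasurable_prod _ fun j hj ↦
    (hg_meas j (Finset.mem_range.1 hj)).mono (𝒻.mono (Finset.mem_range.1 hj))

lemma integrable_prod_range [IsFiniteMeasure P] {g : ℕ → Ω → ℝ} {t : ℕ}
    (hg_meas : ∀ j < t, AEStronglyMeasurable (g j) P)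
    (hg_bdd : ∀ j < t, ∃ K, ∀ᵐ ω ∂P, ‖g j ω‖ ≤ K) :
    Integrable (∏ j ∈ Finset.range t, g j) P := by
  induction t with
  | zero => exact integrable_const 1
  | succ t ih =>
    obtain ⟨K, hK⟩ := hg_bdd t t.lt_succ_self
    rw [Finset.prod_range_succ]
    exact (ih (fun j hj ↦ hg_meas j (hj.trans t.lt_succ_self))
      (fun j hj ↦ hg_bdd j (hj.trans t.lt_succ_self))).mul_bdd (hg_meas t t.lt_succ_self) hK

lemma martingale_prod_range_min [IsFiniteMeasure P] {𝒻 : Filtration ℕ m0} {N : ℕ}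
    {g : ℕ → Ω → ℝ} (hg_meas : ∀ j < N, StronglyMeasurable[𝒻 (j + 1)] (g j))
    (hg_bdd : ∀ j < N, ∃ K, ∀ᵐ ω ∂P, ‖g j ω‖ ≤ K) (hg : ∀ j < N, P[g j | 𝒻 j] =ᵐ[P] 1) :
    Martingale (fun t ↦ ∏ j ∈ Finset.range (min t N), g j) 𝒻 P := by
  have hmeas {t : ℕ} (ht : t ≤ N) : StronglyMeasurable[𝒻 t] (∏ j ∈ Finset.range t, g j) :=
    stronglyMeasurable_prod_range fun j hj ↦ hg_meas j (hj.trans_le ht)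
  have hadapted (t : ℕ) : StronglyMeasurable[𝒻 t] (∏ j ∈ Finset.range (min t N), g j) :=
    (hmeas (min_le_right t N)).mono (𝒻.mono (min_le_left t N))
  have hint {t : ℕ} (ht : t ≤ N) : Integrable (∏ j ∈ Finset.range t, g j) P :=
    integrable_prod_range
      (fun j hj ↦ ((hg_meas j (hj.trans_le ht)).mono (𝒻.le _)).aestronglyMeasurable)
      fun j hj ↦ hg_bdd j (hj.trans_le ht)
  refine martingale_nat hadapted (fun t ↦ hint (min_le_right t N)) fun t ↦ ?_
  rcases lt_or_ge t N with ht | ht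
  · obtain ⟨K, hK⟩ := hg_bdd t ht
    have hg_int : Integrable (g t) P :=
      .of_bound ((hg_meas t ht).mono (𝒻.le _)).aestronglyMeasurable K hK
    have hprod_int := hint ht
    rw [min_eq_left ht.le, min_eq_left (Nat.succ_le_of_lt ht)]
    rw [Finset.prod_range_succ] at hprod_int ⊢
    filter_upwards [condExp_mul_of_stronglyMeasurable_left (hmeas ht.le) hprod_int hg_int,
      hg t ht] with ω hω hgω
    rw [hω, Pi.mul_apply, hgω, Pi.one_apply, mul_one]
  · have hstopped : min (t + 1) N = min t N := by omega
    rw [hstopped, condExp_of_stronglyMeasurable (𝒻.le t) (hadapted t) (hint (min_le_right t N))]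

/-- **Ville's inequality** up to a finite horizon. -/
lemma measure_exists_le_of_martingale [IsFiniteMeasure P] {𝒻 : Filtration ℕ m0}
    {X : ℕ → Ω → ℝ} (hX : Martingale X 𝒻 P) (N : ℕ) (hXN : 0 ≤ᵐ[P] X N) {c : ℝ} (hc : 0 < c) :
    P {ω | ∃ t ≤ N, c ≤ X t ω} ≤ ENNReal.ofReal ((∫ ω, X 0 ω ∂P) / c) := by
  set B := {ω | (c.toNNReal : ℝ) ≤
    (Finset.range (N + 1)).sup' Finset.nonempty_range_add_one fun t ↦ X⁺ t ω}
  have hsub : {ω | ∃ t ≤ N, c ≤ X t ω} ⊆ B := by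
    rintro ω ⟨t, ht, hct⟩
    simp only [B, Set.mem_ofPred_eq, Real.coe_toNNReal c hc.le, Finset.le_sup'_iff]
    exact ⟨t, Finset.mem_range_succ_iff.2 ht, hct.trans (le_posPart (X t ω))⟩
  have hpos : Submartingale X⁺ 𝒻 P := hX.submartingale.pos
  have maximal : ENNReal.ofReal c * P B ≤ ENNReal.ofReal (∫ ω, X 0 ω ∂P) := calc
    ENNReal.ofReal c * P B ≤ ENNReal.ofReal (∫ ω in B, X⁺ N ω ∂P) :=
      maximal_ineq hpos (fun t ω ↦ posPart_nonneg (X t ω)) N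
    _ ≤ ENNReal.ofReal (∫ ω, X⁺ N ω ∂P) := ENNReal.ofReal_le_ofReal <|
      setIntegral_le_integral (hpos.integrable N) (ae_of_all _ fun ω ↦ posPart_nonneg (X N ω))
    _ = ENNReal.ofReal (∫ ω, X N ω ∂P) := by
      congr 1
      exact integral_congr_ae (hXN.mono fun ω hω ↦ posPart_eq_self.2 hω)
    _ = ENNReal.ofReal (∫ ω, X 0 ω ∂P) := by
      simpa using congrArg ENNReal.ofReal (hX.setIntegral_eq N.zero_le MeasurableSet.univ).symm
  rw [ENNReal.ofReal_div_of_pos hc, ENNReal.le_div_iff_mul_le (by simp [hc]) (by simp), mul_comm]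
  exact (mul_le_mul_right (measure_mono hsub) _).trans maximal

lemma ae_nonneg_wealth {w μ X : ℕ → Ω → ℝ} {t : ℕ}
    (hX : ∀ j < t, ∀ ω, X (j + 1) ω ∈ Set.Icc (0 : ℝ) 1)
    (hw : ∀ j < t, ∀ᵐ ω ∂P, IsAdmissibleBet (μ (j + 1) ω) (w (j + 1) ω)) :
    0 ≤ᵐ[P] wealth w μ X t := by
  filter_upwards [ae_all_iff.2 fun j ↦ ae_all_iff.2 (hw j)] with ω hω
  exact Finset.prod_nonneg fun j hj ↦
    betFactor_nonneg (hω j (Finset.mem_range.1 hj)) (hX j (Finset.mem_range.1 hj) ω)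

lemma martingale_wealth_min [IsFiniteMeasure P] {𝒻 : Filtration ℕ m0} {N : ℕ}
    {w μ X : ℕ → Ω → ℝ} (hw_meas : ∀ j < N, Measurable[𝒻 j] (w (j + 1)))
    (hμ_meas : ∀ j < N, Measurable[𝒻 j] (μ (j + 1)))
    (hX_meas : ∀ j < N, Measurable[𝒻 (j + 1)] (X (j + 1)))
    (hX : ∀ j < N, Integrable (X (j + 1)) P)
    (hXμ : ∀ j < N, P[X (j + 1) | 𝒻 j] =ᵐ[P] μ (j + 1))
    (hw : ∀ j < N, ∀ᵐ ω ∂P, IsAdmissibleBet (μ (j + 1) ω) (w (j + 1) ω))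
    (hbdd : ∀ j < N, ∃ K, ∀ᵐ ω ∂P,
      ‖betFactor (w (j + 1) ω) (μ (j + 1) ω) (X (j + 1) ω)‖ ≤ K) :
    Martingale (fun t ↦ wealth w μ X (min t N)) 𝒻 P := by
  set g : ℕ → Ω → ℝ := fun j ω ↦ betFactor (w (j + 1) ω) (μ (j + 1) ω) (X (j + 1) ω)
  have hg_meas (j : ℕ) (hj : j < N) : StronglyMeasurable[𝒻 (j + 1)] (g j) := by
    have hle : 𝒻 j ≤ 𝒻 (j + 1) := 𝒻.mono j.le_succ
    exact (measurable_const.add (((hw_meas j hj).mono hle le_rfl).mul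
      (((hX_meas j hj).div ((hμ_meas j hj).mono hle le_rfl)).sub_const 1))).stronglyMeasurable
  have wealth_eq (t : ℕ) : wealth w μ X t = ∏ j ∈ Finset.range t, g j := by
    ext ω
    rw [wealth, Finset.prod_apply]
  simp_rw [wealth_eq]
  refine martingale_prod_range_min hg_meas hbdd fun j hj ↦ ?_
  obtain ⟨K, hK⟩ := hbdd j hj
  exact condExp_betFactor (𝒻.le j) (hw_meas j hj) (hμ_meas j hj) (hX j hj) (hXμ j hj) (hw j hj)
    (.of_bound ((hg_meas j hj).mono (𝒻.le _)).aestronglyMeasurable K hK)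

end Betting

namespace IsInteractiveReveal

variable {Ω ι : Type*} {𝒢 m0 : MeasurableSpace Ω} {P : Measure Ω} [Fintype ι] [DecidableEq ι]
  [MeasurableSpace ι] {A : ι → Ω → ℝ} {I₀ : Finset ι} {N : ℕ} {π : ℕ → Ω → ι}
  {I : ℕ → Ω → Finset ι} {ℱ : ℕ → MeasurableSpace Ω}

lemma norm_betFactor_le_card (hr : IsInteractiveReveal A 𝒢 I₀ N π I ℱ)
    (hA01 : ∀ i ω, A i ω = 0 ∨ A i ω = 1) {t : ℕ} (ht : t < N) {ω : Ω} {b : ℝ}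
    (hb : IsAdmissibleBet (remainingMean (A · ω) (I t ω)) b) :
    ‖betFactor b (remainingMean (A · ω) (I t ω)) (A (π (t + 1) ω) ω)‖ ≤ Fintype.card ι := by
  have hA_mem : A (π (t + 1) ω) ω ∈ Set.Icc (0 : ℝ) 1 := by
    rcases hA01 (π (t + 1) ω) ω with h | h <;> simp [h]
  have hunrevealed : (I t ω)ᶜ.Nonempty := ⟨_, Finset.mem_compl.2 (hr.index_notMem t ht ω)⟩
  have hcard : (1 : ℝ) ≤ Fintype.card ι :=
    Nat.one_le_cast.2 (Fintype.card_pos_iff.2 ⟨π (t + 1) ω⟩)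
  rw [Real.norm_of_nonneg (betFactor_nonneg hb hA_mem)]
  exact betFactor_le hb hA_mem hcard fun hμ ↦
    ⟨inv_remainingMean_le_card (hA01 · ω) hμ.1,
      inv_one_sub_remainingMean_le_card (hA01 · ω) hunrevealed hμ.2⟩

lemma martingale_wealth [MeasurableSingletonClass ι] [IsFiniteMeasure P]
    (hr : IsInteractiveReveal A 𝒢 I₀ N π I ℱ) (hA : ∀ i, Measurable (A i)) (h𝒢 : 𝒢 ≤ m0)
    (hexch : Exchangeable A P)
    (hindep : Indep (⨆ i, MeasurableSpace.comap (A i) inferInstance) 𝒢 P)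
    (hA01 : ∀ i ω, A i ω = 0 ∨ A i ω = 1) {c : ℝ} (hsum : ∀ ω, ∑ i, A i ω = c)
    {w μ : ℕ → Ω → ℝ} (hμ : ∀ t < N, ∀ ω, μ (t + 1) ω = remainingMean (A · ω) (I t ω))
    (hw_meas : ∀ t < N, Measurable[ℱ t] (w (t + 1)))
    (hw : ∀ t < N, ∀ᵐ ω ∂P, IsAdmissibleBet (μ (t + 1) ω) (w (t + 1) ω)) :
    Martingale (fun t ↦ wealth w μ (fun j ω ↦ A (π j ω) ω) (min t N)) (hr.filtration hA h𝒢) P := by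
  have hinfo {t : ℕ} (ht : t ≤ N) : hr.filtration hA h𝒢 t = ℱ t := hr.filtration_apply hA h𝒢 ht
  have hX_meas (t : ℕ) (ht : t < N) :
      Measurable[hr.filtration hA h𝒢 (t + 1)] fun ω ↦ A (π (t + 1) ω) ω :=
    hinfo ht ▸ hr.measurable_apply_index ht
  have hint {X : Ω → ℝ} (hX : Measurable X) (hX01 : ∀ ω, X ω = 0 ∨ X ω = 1) : Integrable X P :=
    .of_bound hX.aestronglyMeasurable 1 <| ae_of_all _ fun ω ↦ by
      rcases hX01 ω with h | h <;> simp [h]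
  refine martingale_wealth_min (fun t ht ↦ hinfo ht.le ▸ hw_meas t ht) (fun t ht ↦ ?_) hX_meas
    (fun t ht ↦ hint ((hX_meas t ht).mono (Filtration.le _ _) le_rfl) fun ω ↦ hA01 _ ω)
    (fun t ht ↦ ?_) hw fun t ht ↦ ⟨Fintype.card ι, (hw t ht).mono fun ω hω ↦ ?_⟩
  · rw [hinfo ht.le, funext (hμ t ht)]
    exact hr.measurable_remainingMean hsum ht.le
  · rw [hinfo ht.le, funext (hμ t ht)]
    exact hr.condExp_apply_index_eq_remainingMean hA h𝒢 hexch hindep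
      (fun i ↦ hint (hA i) (hA01 i)) hsum ht
  · rw [hμ t ht] at hω ⊢
    exact hr.norm_betFactor_le_card hA01 ht hω

end IsInteractiveReveal

/-- **Sampling without replacement (completely randomized experiment).**
Under the global causal null, with `(A 1, …, A n)` uniformly distributed over binary vectors
summing to `m` and independent of `𝒢`, the conditional expectation of the interactively
selected assignment given the revealed information equals the remaining proportion of
treatments; defining the predictable probabilities `μR t` accordingly and betting
`w t ∈ [−μR t/(1−μR t), 1]` (on the event `μR t ∈ (0,1)`), the wealth process
`M t = ∏_{j≤t} [1 + w j (A (π j)/μR j − 1)]` is a nonnegative martingale, and consequently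
`P(∃ t, M t ≥ 1/α) ≤ α` for every `α ∈ (0,1)`. -/
theorem ibet_without_replacement_martingale_ville
    {Ω : Type*} {m0 : MeasurableSpace Ω} (P : Measure Ω) [IsProbabilityMeasure P]
    (n m : ℕ) (hm : 1 ≤ m) (hmn : m ≤ n - 1)
    -- the treatment assignments: a uniformly random binary vector with sum `m`
    (A : Fin n → Ω → ℝ) (hAmeas : ∀ i, Measurable (A i))
    (hA01 : ∀ i ω, A i ω = 0 ∨ A i ω = 1)
    (hAsum : ∀ ω, ∑ i, A i ω = (m : ℝ))
    (hAunif : ∀ v : Fin n → ℝ, (∀ i, v i = 0 ∨ v i = 1) → (∑ i, v i) = (m : ℝ) →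
      P {ω | ∀ i, A i ω = v i} = ((n.choose m : ℝ≥0∞))⁻¹)
    -- the σ-algebra generated by all outcomes and covariates, independent of the vector `A`
    (𝒢 : MeasurableSpace Ω) (h𝒢 : 𝒢 ≤ m0)
    (hindep : Indep (⨆ i, MeasurableSpace.comap (A i) inferInstance) 𝒢 P)
    -- the initially revealed holdout set
    (I₀ : Finset (Fin n))
    -- the interactively chosen ordering `π`, the revealed sets `I t`, and the filtration `ℱ`
    (π : ℕ → Ω → Fin n) (I : ℕ → Ω → Finset (Fin n)) (ℱ : ℕ → MeasurableSpace Ω)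
    (hI0 : ∀ ω, I 0 ω = I₀)
    (hIsucc : ∀ t, t + 1 ≤ n - I₀.card → ∀ ω, I (t+1) ω = insert (π (t+1) ω) (I t ω))
    (hℱ0 : ℱ 0 = 𝒢 ⊔ ⨆ i ∈ I₀, MeasurableSpace.comap (A i) inferInstance)
    (hℱsucc : ∀ t, t + 1 ≤ n - I₀.card → ℱ (t+1) = ℱ t ⊔
        MeasurableSpace.comap (fun ω => A (π (t+1) ω) ω) inferInstance)
    (hπmeas : ∀ t, t + 1 ≤ n - I₀.card → Measurable[ℱ t] (π (t+1)))
    (hπnew : ∀ t, t + 1 ≤ n - I₀.card → ∀ ω, π (t+1) ω ∉ I t ω)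
    -- the predictable treatment probabilities `μR (t+1) = (m − Σ_{i ∈ I t} A i)/(n − |I t|)`
    (μR : ℕ → Ω → ℝ)
    (hμR : ∀ t, t + 1 ≤ n - I₀.card → ∀ ω,
      μR (t+1) ω = ((m : ℝ) - ∑ i ∈ I t ω, A i ω) / ((n : ℝ) - (I t ω).card))
    -- the predictable bets, constrained on the event `μR (t+1) ∈ (0,1)` (and null otherwise)
    (w : ℕ → Ω → ℝ)
    (hwmeas : ∀ t, t + 1 ≤ n - I₀.card → Measurable[ℱ t] (w (t+1)))
    (hw : ∀ t, t + 1 ≤ n - I₀.card → ∀ᵐ ω ∂P,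
      (μR (t+1) ω ∈ Set.Ioo (0:ℝ) 1 →
        w (t+1) ω ∈ Set.Icc (-(μR (t+1) ω / (1 - μR (t+1) ω))) 1) ∧
      (μR (t+1) ω ∉ Set.Ioo (0:ℝ) 1 → w (t+1) ω = 0))
    -- the wealth process
    (M : ℕ → Ω → ℝ)
    (hM : ∀ t, t ≤ n - I₀.card → ∀ ω, M t ω = ∏ j ∈ Finset.range t,
        (1 + w (j+1) ω * (A (π (j+1) ω) ω / μR (j+1) ω - 1))) :
    -- `(M t)` is a nonnegative martingale with respect to `(ℱ t)` …
    ((∀ t, t ≤ n - I₀.card → (∀ᵐ ω ∂P, 0 ≤ M t ω) ∧ StronglyMeasurable[ℱ t] (M t)) ∧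
     (∀ ω, M 0 ω = 1) ∧
     (∀ t, t + 1 ≤ n - I₀.card → P[M (t+1) | ℱ t] =ᵐ[P] M t)) ∧
    -- … and consequently the i-bet test controls the type-I error
    (∀ α ∈ Set.Ioo (0:ℝ) 1,
      P {ω | ∃ t, t ≤ n - I₀.card ∧ 1/α ≤ M t ω} ≤ ENNReal.ofReal α) := by
  have hr : IsInteractiveReveal A 𝒢 I₀ (n - I₀.card) π I ℱ :=
    ⟨hI0, hIsucc, hℱ0, hℱsucc, hπmeas, hπnew⟩
  have hexch : Exchangeable A P := exchangeable_of_uniform_binary hAmeas hA01 hAsum hAunif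
  have hμ (t : ℕ) (ht : t < n - I₀.card) (ω : Ω) :
      μR (t + 1) ω = remainingMean (A · ω) (I t ω) := by
    rw [hμR t ht, remainingMean_eq_sub_div, hAsum, Fintype.card_fin]
  have hM_eq (t : ℕ) (ht : t ≤ n - I₀.card) : M t = wealth w μR (fun j ω ↦ A (π j ω) ω) t :=
    funext (hM t ht)
  have hM0 (ω : Ω) : M 0 ω = 1 := by simp [hM 0]
  have hnonneg (t : ℕ) (ht : t ≤ n - I₀.card) : 0 ≤ᵐ[P] M t := by
    rw [hM_eq t ht]
    exact ae_nonneg_wealth (fun j _ ω ↦ by rcases hA01 (π (j + 1) ω) ω with h | h <;> simp [h])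
      fun j hj ↦ hw j (hj.trans_le ht)
  have hmart : Martingale (fun t ↦ M (min t (n - I₀.card))) (hr.filtration hAmeas h𝒢) P := by
    simp_rw [hM_eq _ (min_le_right _ _)]
    exact hr.martingale_wealth hAmeas h𝒢 hexch hindep hA01 hAsum hμ hwmeas hw
  refine ⟨⟨fun t ht ↦ ⟨hnonneg t ht, ?_⟩, hM0, fun t ht ↦ ?_⟩, fun α hα ↦ ?_⟩
  · have h : StronglyMeasurable[hr.filtration hAmeas h𝒢 t] (M (min t (n - I₀.card))) :=
      hmart.stronglyAdapted t
    rwa [hr.filtration_apply hAmeas h𝒢 ht, min_eq_left ht] at h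
  · simpa [hr.filtration_apply hAmeas h𝒢 (Nat.le_of_succ_le ht), ht, Nat.le_of_succ_le ht]
      using hmart.condExp_ae_eq t.le_succ
  · have ville := measure_exists_le_of_martingale hmart (n - I₀.card)
      (by simpa using hnonneg _ le_rfl) (one_div_pos.2 hα.1)
    refine (measure_mono ?_).trans (ville.trans_eq (by simp [hM0]))
    exact fun ω ⟨t, ht, h⟩ ↦ ⟨t, ht, by rwa [min_eq_left ht]⟩
end

section
/- Sequential i-bet test: under the global null, let A_1, A_2, … be independent {0,1}-valued random variables with P(A_t = 1) = μ_t ∈ (0,1), such that A_t is independent of 𝒢_{t−1} for every t; let I_t ∈ {0,1} and w_t ∈ [−μ_t/(1−μ_t), 1] be 𝒢_{t−1}-measurable, and define M_0 = 1, M_t = ∏_{i=1}^t [1 + I_i·w_i·(A_i/μ_i − 1)]. Then (M_t)_{t≥0} is a nonnegative martingale with respect to (𝒢_t) with M_0 = 1, and for every α ∈ (0,1), P(∃ t ≥ 1 : M_t ≥ 1/α) ≤ α. -/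
open MeasureTheory ProbabilityTheory
open scoped ENNReal

/-!
A unit stake bet on `A ∈ [0, 1]` pays `1 + b (A / μ - 1)`, which interpolates linearly between
`1 - b` at `A = 0` and `1 + b (1 - μ) / μ` at `A = 1`. The interval `[-μ / (1 - μ), 1]` is exactly
the set of bets for which both endpoints are nonnegative, and if `μ` is the conditional mean of `A`
then a predictable bet has conditional mean payoff `1`. The wealth is thus a product of nonnegative
bounded factors with conditional mean `1`, hence a nonnegative martingale, and Doob's maximal
inequality on finite horizons passes to the infinite horizon by monotone continuity of the measure.
An inclusion indicator only scales a bet towards `0`, which stays inside the interval.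
-/

section Martingale

variable {Ω : Type*} {m0 : MeasurableSpace Ω} {P : Measure Ω} [IsFiniteMeasure P]
  {𝒢 : Filtration ℕ m0}

theorem mul_measure_exists_le_le_of_submartingale {f : ℕ → Ω → ℝ} (hf : Submartingale f 𝒢 P)
    (hf_nonneg : 0 ≤ f) {C : ℝ} (hC : ∀ n, ∫ ω, f n ω ∂P ≤ C) (ε : NNReal) :
    ε * P {ω | ∃ t, ε ≤ f t ω} ≤ ENNReal.ofReal C := by
  let crossed (n : ℕ) : Set Ω := {ω | ∃ t ≤ n, ε ≤ f t ω}
  have crossed_mono : Monotone crossed := fun a b hab ω ⟨t, ht, h⟩ => ⟨t, ht.trans hab, h⟩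
  have iUnion_crossed : ⋃ n, crossed n = {ω | ∃ t, ε ≤ f t ω} := by
    ext ω
    simp only [Set.mem_iUnion, crossed, Set.mem_ofPred_eq]
    exact ⟨fun ⟨_, t, _, h⟩ => ⟨t, h⟩, fun ⟨t, h⟩ => ⟨t, t, le_rfl, h⟩⟩
  have crossed_eq (n : ℕ) : crossed n =
      {ω | ε ≤ (Finset.range (n + 1)).sup' Finset.nonempty_range_add_one fun k => f k ω} := by
    ext ω
    simp only [crossed, Set.mem_ofPred_eq, Finset.le_sup'_iff, Finset.mem_range, Nat.lt_succ_iff]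
  rw [← iUnion_crossed, crossed_mono.measure_iUnion, ENNReal.mul_iSup]
  refine iSup_le fun n => ?_
  calc ε * P (crossed n) ≤ ENNReal.ofReal (∫ ω in crossed n, f n ω ∂P) := by
        rw [crossed_eq]
        exact maximal_ineq hf hf_nonneg n
    _ ≤ ENNReal.ofReal C := ENNReal.ofReal_le_ofReal <|
        (setIntegral_le_integral (hf.integrable n) (.of_forall (hf_nonneg n))).trans (hC n)

theorem integral_eq_integral_zero_of_martingale {E : Type*} [NormedAddCommGroup E]
    [NormedSpace ℝ E] [CompleteSpace E] {f : ℕ → Ω → E} (hf : Martingale f 𝒢 P) (n : ℕ) :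
    ∫ ω, f n ω ∂P = ∫ ω, f 0 ω ∂P := by
  simpa only [setIntegral_univ] using (hf.setIntegral_eq n.zero_le .univ).symm

theorem measure_exists_le_le_of_martingale {f : ℕ → Ω → ℝ} (hf : Martingale f 𝒢 P)
    (hf_nonneg : 0 ≤ f) {ε : ℝ} (hε : 0 < ε) :
    P {ω | ∃ t, ε ≤ f t ω} ≤ ENNReal.ofReal ((∫ ω, f 0 ω ∂P) / ε) := by
  lift ε to NNReal using hε.le
  rw [ENNReal.ofReal_div_of_pos hε, ENNReal.ofReal_coe_nnreal,
    ENNReal.le_div_iff_mul_le (.inl (by simpa using hε.ne')) (.inl ENNReal.coe_ne_top), mul_comm]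
  exact mul_measure_exists_le_le_of_submartingale hf.submartingale hf_nonneg
    (fun n => (integral_eq_integral_zero_of_martingale hf n).le) ε

theorem martingale_prod_of_condExp_eq_one {X : ℕ → Ω → ℝ}
    (hX_meas : ∀ t, StronglyMeasurable[𝒢 (t + 1)] (X t))
    (hX_bdd : ∀ t, ∃ C, ∀ᵐ ω ∂P, ‖X t ω‖ ≤ C) (hX_mean : ∀ t, P[X t | 𝒢 t] =ᵐ[P] 1) :
    Martingale (fun t ω => ∏ i ∈ Finset.range t, X i ω) 𝒢 P := by
  have hX_aesm (t : ℕ) : AEStronglyMeasurable (X t) P :=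
    ((hX_meas t).mono (𝒢.le _)).aestronglyMeasurable
  have prod_meas (t : ℕ) : StronglyMeasurable[𝒢 t] fun ω => ∏ i ∈ Finset.range t, X i ω :=
    Finset.stronglyMeasurable_fun_prod _ fun i hi =>
      (hX_meas i).mono (𝒢.mono (Finset.mem_range.1 hi))
  have prod_int (t : ℕ) : Integrable (fun ω => ∏ i ∈ Finset.range t, X i ω) P := by
    induction t with
    | zero => simp
    | succ t ih =>
      obtain ⟨C, hC⟩ := hX_bdd t
      simpa only [Finset.prod_range_succ] using ih.mul_bdd (hX_aesm t) hC
  refine martingale_nat prod_meas prod_int fun t => ?_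
  obtain ⟨C, hC⟩ := hX_bdd t
  have X_int : Integrable (X t) P := .of_bound (hX_aesm t) C hC
  have succ_eq : (fun ω => ∏ i ∈ Finset.range (t + 1), X i ω) =
      (fun ω => ∏ i ∈ Finset.range t, X i ω) * X t :=
    funext fun ω => Finset.prod_range_succ _ t
  have pull_out := condExp_mul_of_stronglyMeasurable_left (prod_meas t)
    (succ_eq ▸ prod_int (t + 1)) X_int
  rw [succ_eq]
  filter_upwards [pull_out, hX_mean t] with ω h_pull h_mean
  simp only [h_pull, Pi.mul_apply, h_mean, Pi.one_apply, mul_one]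

end Martingale

section BetPayoff

/-- Wealth after staking one unit on the outcome `a`, whose mean is `μ`, with signed bet size `b`:
the factor `1 + b (a / μ - 1)` of the i-bet test, an inclusion indicator being absorbed in `b`. -/
noncomputable def betPayoff (μ b a : ℝ) : ℝ :=
  1 + b * (a / μ - 1)

variable {μ b a : ℝ}

theorem betPayoff_eq_interpolation (hμ : μ ≠ 0) :
    betPayoff μ b a = a * (1 + b * ((1 - μ) / μ)) + (1 - a) * (1 - b) := by
  unfold betPayoff
  field_simp
  ring

theorem betPayoff_nonneg (hμ : μ ∈ Set.Ioo 0 1) (hb : b ∈ Set.Icc (-(μ / (1 - μ))) 1)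
    (ha : a ∈ Set.Icc 0 1) : 0 ≤ betPayoff μ b a := by
  have payoff_one_nonneg : 0 ≤ 1 + b * ((1 - μ) / μ) := by
    have odds_pos : 0 < (1 - μ) / μ := div_pos (sub_pos.2 hμ.2) hμ.1
    have lower_bound := hb.1
    rw [← inv_div, ← one_div, ← neg_div, div_le_iff₀ odds_pos] at lower_bound
    linarith
  rw [betPayoff_eq_interpolation hμ.1.ne']
  exact add_nonneg (mul_nonneg ha.1 payoff_one_nonneg)
    (mul_nonneg (sub_nonneg.2 ha.2) (sub_nonneg.2 hb.2))

theorem exists_norm_betPayoff_le (μ : ℝ) {s t : Set ℝ} (hs : Bornology.IsBounded s)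
    (ht : Bornology.IsBounded t) : ∃ C, ∀ b ∈ s, ∀ a ∈ t, ‖betPayoff μ b a‖ ≤ C := by
  have payoff_cont : Continuous fun p : ℝ × ℝ => betPayoff μ p.1 p.2 := by
    unfold betPayoff
    fun_prop
  obtain ⟨C, hC⟩ :=
    (hs.prod ht).isCompact_closure.exists_bound_of_continuousOn payoff_cont.continuousOn
  exact ⟨C, fun b hb a ha => hC (b, a) (subset_closure ⟨hb, ha⟩)⟩

theorem mem_Icc_of_zero_or_one (ha : a = 0 ∨ a = 1) : a ∈ Set.Icc (0 : ℝ) 1 := by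
  rcases ha with rfl | rfl <;> simp

theorem mul_mem_Icc_bets (hμ : μ ∈ Set.Ico 0 1) (hb : b ∈ Set.Icc (-(μ / (1 - μ))) 1)
    (ha : a ∈ Set.Icc 0 1) : a * b ∈ Set.Icc (-(μ / (1 - μ))) 1 := by
  have zero_mem : (0 : ℝ) ∈ Set.Icc (-(μ / (1 - μ))) 1 :=
    ⟨neg_nonpos.2 (div_nonneg hμ.1 (sub_nonneg.2 hμ.2.le)), zero_le_one⟩
  exact (convex_Icc _ _).smul_mem_of_zero_mem zero_mem hb ha

end BetPayoff

section CondExp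

variable {Ω : Type*} {m m0 : MeasurableSpace Ω} {P : Measure Ω}

theorem stronglyMeasurable_betPayoff (μ : ℝ) {b A : Ω → ℝ} (hb : StronglyMeasurable[m] b)
    (hA : StronglyMeasurable[m] A) : StronglyMeasurable[m] fun ω => betPayoff μ (b ω) (A ω) :=
  stronglyMeasurable_const.add
    (hb.mul (((hA.measurable.div_const μ).stronglyMeasurable).sub stronglyMeasurable_const))

theorem condExp_betPayoff_eq_one [IsFiniteMeasure P] (hm : m ≤ m0) {μ : ℝ} (hμ : μ ≠ 0)
    {b A : Ω → ℝ} (hb : StronglyMeasurable[m] b) (hA_int : Integrable A P)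
    (h_int : Integrable (fun ω => betPayoff μ (b ω) (A ω)) P)
    (hA_mean : P[A | m] =ᵐ[P] fun _ => μ) :
    P[fun ω => betPayoff μ (b ω) (A ω) | m] =ᵐ[P] 1 := by
  let excess : Ω → ℝ := μ⁻¹ • A - 1
  have one_int : Integrable (1 : Ω → ℝ) P := integrable_const 1
  have one_condExp : P[(1 : Ω → ℝ) | m] = 1 := condExp_const hm 1
  have excess_int : Integrable excess P := (hA_int.smul _).sub one_int
  have excess_mean : P[excess | m] =ᵐ[P] 0 := by
    filter_upwards [condExp_sub (hA_int.smul μ⁻¹) one_int m, condExp_smul μ⁻¹ A m, hA_mean]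
      with ω h_sub h_smul h_mean
    simp [excess, h_sub, h_smul, h_mean, one_condExp, hμ]
  have payoff_eq : (fun ω => betPayoff μ (b ω) (A ω)) = 1 + b * excess := by
    ext ω
    simp only [betPayoff, excess, Pi.add_apply, Pi.mul_apply, Pi.sub_apply, Pi.smul_apply,
      Pi.one_apply, smul_eq_mul, div_eq_inv_mul]
  have gain_int : Integrable (b * excess) P := by
    simpa only [payoff_eq, add_sub_cancel_left] using h_int.sub one_int
  rw [payoff_eq]
  filter_upwards [condExp_add one_int gain_int m,
    condExp_mul_of_stronglyMeasurable_left hb gain_int excess_int, excess_mean]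
    with ω h_add h_mul h_excess
  simp [h_add, h_mul, h_excess, one_condExp]

theorem condExp_eq_of_indep_of_zero_or_one [IsFiniteMeasure P] {A : Ω → ℝ} {μ : ℝ} (hm : m ≤ m0)
    (hA : Measurable A) (hA01 : ∀ ω, A ω = 0 ∨ A ω = 1) (hμ : 0 ≤ μ)
    (hA1 : P {ω | A ω = 1} = ENNReal.ofReal μ)
    (h_indep : Indep (MeasurableSpace.comap A inferInstance) m P) :
    P[A | m] =ᵐ[P] fun _ => μ := by
  have A_eq : A = {ω | A ω = 1}.indicator 1 := by
    ext ω
    rcases hA01 ω with h | h <;> simp [h]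
  have A_one_meas : MeasurableSet {ω | A ω = 1} := hA (measurableSet_singleton 1)
  have A_mean : ∫ ω, A ω ∂P = μ := by
    rw [A_eq, integral_indicator_one A_one_meas, measureReal_def, hA1, ENNReal.toReal_ofReal hμ]
  simpa only [A_mean] using
    condExp_indep_eq hA.comap_le hm (comap_measurable A).stronglyMeasurable h_indep

end CondExp

section BetWealth

variable {Ω : Type*} {m0 : MeasurableSpace Ω} {P : Measure Ω} {𝒢 : Filtration ℕ m0}
  {A b : ℕ → Ω → ℝ} {μ : ℕ → ℝ}

/-- Wealth after `t` rounds of reinvesting everything, starting from `1`. Rounds are numbered from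
`1`, so the values of `μ`, `b` and `A` at index `0` are ignored. -/
noncomputable def betWealth (μ : ℕ → ℝ) (b A : ℕ → Ω → ℝ) (t : ℕ) (ω : Ω) : ℝ :=
  ∏ i ∈ Finset.range t, betPayoff (μ (i + 1)) (b (i + 1) ω) (A (i + 1) ω)

theorem betWealth_zero (ω : Ω) : betWealth μ b A 0 ω = 1 := by
  simp only [betWealth, Finset.range_zero, Finset.prod_empty]

theorem betWealth_nonneg (hμ : ∀ t, μ (t + 1) ∈ Set.Ioo 0 1)
    (hA : ∀ t ω, A (t + 1) ω ∈ Set.Icc 0 1)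
    (hb : ∀ t ω, b (t + 1) ω ∈ Set.Icc (-(μ (t + 1) / (1 - μ (t + 1)))) 1) :
    0 ≤ betWealth μ b A :=
  fun _ ω => Finset.prod_nonneg fun i _ => betPayoff_nonneg (hμ i) (hb i ω) (hA i ω)

theorem martingale_betWealth [IsFiniteMeasure P] (hμ : ∀ t, μ (t + 1) ≠ 0)
    (hA_meas : ∀ t, StronglyMeasurable[𝒢 (t + 1)] (A (t + 1)))
    (hA_bdd : ∀ t, Bornology.IsBounded (Set.range (A (t + 1))))
    (hA_mean : ∀ t, P[A (t + 1) | 𝒢 t] =ᵐ[P] fun _ => μ (t + 1))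
    (hb_meas : ∀ t, StronglyMeasurable[𝒢 t] (b (t + 1)))
    (hb_bdd : ∀ t, Bornology.IsBounded (Set.range (b (t + 1)))) :
    Martingale (betWealth μ b A) 𝒢 P := by
  have payoff_meas (t : ℕ) : StronglyMeasurable[𝒢 (t + 1)]
      fun ω => betPayoff (μ (t + 1)) (b (t + 1) ω) (A (t + 1) ω) :=
    stronglyMeasurable_betPayoff _ ((hb_meas t).mono (𝒢.mono t.le_succ)) (hA_meas t)
  have payoff_bdd (t : ℕ) :
      ∃ C, ∀ᵐ ω ∂P, ‖betPayoff (μ (t + 1)) (b (t + 1) ω) (A (t + 1) ω)‖ ≤ C := by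
    obtain ⟨C, hC⟩ := exists_norm_betPayoff_le (μ (t + 1)) (hb_bdd t) (hA_bdd t)
    exact ⟨C, .of_forall fun ω => hC _ ⟨ω, rfl⟩ _ ⟨ω, rfl⟩⟩
  refine martingale_prod_of_condExp_eq_one payoff_meas payoff_bdd fun t => ?_
  have A_int : Integrable (A (t + 1)) P := by
    obtain ⟨C, hC⟩ := (hA_bdd t).exists_norm_le
    exact .of_bound ((hA_meas t).mono (𝒢.le _)).aestronglyMeasurable C
      (.of_forall fun ω => hC _ ⟨ω, rfl⟩)
  obtain ⟨C, hC⟩ := payoff_bdd t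
  exact condExp_betPayoff_eq_one (𝒢.le t) (hμ t) (hb_meas t) A_int
    (.of_bound ((payoff_meas t).mono (𝒢.le _)).aestronglyMeasurable C hC) (hA_mean t)

end BetWealth

theorem sequential_ibet_general
    {Ω : Type*} {m0 : MeasurableSpace Ω} (P : Measure Ω) [IsProbabilityMeasure P]
    (𝒢 : Filtration ℕ m0)
    (A : ℕ → Ω → ℝ) (μ : ℕ → ℝ)
    (hμ : ∀ t, μ (t + 1) ∈ Set.Ioo (0 : ℝ) 1)
    (hA_meas : ∀ t, StronglyMeasurable[𝒢 (t + 1)] (A (t + 1)))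
    (hA : ∀ t ω, A (t + 1) ω ∈ Set.Icc (0 : ℝ) 1)
    (hA_mean : ∀ t, P[A (t + 1) | 𝒢 t] =ᵐ[P] fun _ => μ (t + 1))
    (b : ℕ → Ω → ℝ) (hb_meas : ∀ t, StronglyMeasurable[𝒢 t] (b (t + 1)))
    (hb : ∀ t ω, b (t + 1) ω ∈ Set.Icc (-(μ (t + 1) / (1 - μ (t + 1)))) 1) :
    (Martingale (betWealth μ b A) 𝒢 P ∧ 0 ≤ betWealth μ b A ∧ ∀ ω, betWealth μ b A 0 ω = 1) ∧
    ∀ α > 0, P {ω | ∃ t, 1 / α ≤ betWealth μ b A t ω} ≤ ENNReal.ofReal α := by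
  have wealth_nonneg : 0 ≤ betWealth μ b A := betWealth_nonneg hμ hA hb
  have wealth_mart : Martingale (betWealth μ b A) 𝒢 P :=
    martingale_betWealth (fun t => (hμ t).1.ne') hA_meas
      (fun t => (Metric.isBounded_Icc _ _).subset (Set.range_subset_iff.2 (hA t))) hA_mean hb_meas
      (fun t => (Metric.isBounded_Icc _ _).subset (Set.range_subset_iff.2 (hb t)))
  refine ⟨⟨wealth_mart, wealth_nonneg, betWealth_zero⟩, fun α hα => ?_⟩
  simpa [betWealth_zero] using
    measure_exists_le_le_of_martingale wealth_mart wealth_nonneg (one_div_pos.2 hα)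

/-- **Sequential i-bet test.** Under the global null, let `A 1, A 2, …` be independent
`{0,1}`-valued random variables with `P(A t = 1) = μ t ∈ (0,1)`, with `A t` independent of
`𝒢 (t−1)`; let the inclusion indicators `I t ∈ {0,1}` and the bets
`w t ∈ [−μ t/(1−μ t), 1]` be `𝒢 (t−1)`-measurable, and set
`M t = ∏_{i=1}^t [1 + I i · w i · (A i/μ i − 1)]`, `M 0 = 1`. Then `(M t)` is a nonnegative
martingale with respect to `(𝒢 t)` with `M 0 = 1`, and for every `α ∈ (0,1)`,
`P(∃ t ≥ 1, M t ≥ 1/α) ≤ α`. -/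
theorem sequential_ibet
    {Ω : Type*} {m0 : MeasurableSpace Ω} (P : Measure Ω) [IsProbabilityMeasure P]
    (𝒢 : Filtration ℕ m0)
    (A : ℕ → Ω → ℝ) (μ : ℕ → ℝ)
    (hμ : ∀ t, μ (t+1) ∈ Set.Ioo (0:ℝ) 1)
    (hAmeas : ∀ t, StronglyMeasurable[𝒢 (t+1)] (A (t+1)))
    (hA01 : ∀ t ω, A (t+1) ω = 0 ∨ A (t+1) ω = 1)
    (hA1 : ∀ t, P {ω | A (t+1) ω = 1} = ENNReal.ofReal (μ (t+1)))
    -- under the null, `A (t+1)` is independent of the revealed information `𝒢 t`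
    (hAindep : ∀ t, Indep (MeasurableSpace.comap (A (t+1)) inferInstance) (𝒢 t) P)
    -- the analyst's predictable inclusion indicators
    (I : ℕ → Ω → ℝ) (hImeas : ∀ t, Measurable[𝒢 t] (I (t+1)))
    (hI01 : ∀ t ω, I (t+1) ω = 0 ∨ I (t+1) ω = 1)
    -- the predictable bets
    (w : ℕ → Ω → ℝ) (hwmeas : ∀ t, Measurable[𝒢 t] (w (t+1)))
    (hw : ∀ t ω, w (t+1) ω ∈ Set.Icc (-(μ (t+1) / (1 - μ (t+1)))) 1)
    -- the wealth process
    (M : ℕ → Ω → ℝ)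
    (hM : ∀ t ω, M t ω = ∏ i ∈ Finset.range t,
        (1 + I (i+1) ω * w (i+1) ω * (A (i+1) ω / μ (i+1) - 1))) :
    (Martingale M 𝒢 P ∧ (∀ t, 0 ≤ᵐ[P] M t) ∧ (∀ ω, M 0 ω = 1)) ∧
    ∀ α ∈ Set.Ioo (0:ℝ) 1,
      P {ω | ∃ t, 1 ≤ t ∧ 1/α ≤ M t ω} ≤ ENNReal.ofReal α := by
  obtain rfl : M = betWealth μ (fun t ω => I t ω * w t ω) A := funext₂ hM
  obtain ⟨⟨wealth_mart, wealth_nonneg, wealth_zero⟩, crossing_le⟩ :=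
    sequential_ibet_general P 𝒢 A μ hμ hAmeas (fun t ω => mem_Icc_of_zero_or_one (hA01 t ω))
      (fun t => condExp_eq_of_indep_of_zero_or_one (𝒢.le t)
        ((hAmeas t).measurable.mono (𝒢.le _) le_rfl) (hA01 t) (hμ t).1.le (hA1 t) (hAindep t))
      (fun t ω => I t ω * w t ω) (fun t => ((hImeas t).mul (hwmeas t)).stronglyMeasurable)
      (fun t ω => mul_mem_Icc_bets (Set.Ioo_subset_Ico_self (hμ t)) (hw t ω)
        (mem_Icc_of_zero_or_one (hI01 t ω)))
  refine ⟨⟨wealth_mart, fun t => .of_forall (wealth_nonneg t), wealth_zero⟩,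
    fun α hα => (measure_mono ?_).trans (crossing_le α hα.1)⟩
  exact fun ω ⟨t, _, h⟩ => ⟨t, h⟩
end
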